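/- arXiv:1203.5626 — 3 statements merged into one kernel-verified Lean document; each statement's English description precedes it below -/
import Mathlib

section
/- For an absolutely continuous random vector Y in ℝ^p, if Pr[Y ∈ H] = 1/2 for every central halfspace H (one whose boundary hyperplane contains the origin), then Y is directionally symmetric, i.e., Y/‖Y‖ has the same distribution as -Y/‖Y‖. -/
open MeasureTheory ProbabilityTheory Metric
open scoped RealInnerProductSpace ENNReal

lemma hasDerivAt_gaussianReal_Iic (c : ℝ) :
    HasDerivAt (fun c ↦ (gaussianReal 0 1).real (Set.Iic c)) (gaussianPDFReal 0 1 c) c := by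
  have hcont : Continuous (gaussianPDFReal 0 1) := by
    unfold gaussianPDFReal
    fun_prop
  have hint := integrable_gaussianPDFReal 0 1
  have heq : (fun c ↦ (gaussianReal 0 1).real (Set.Iic c)) = fun c ↦
      (∫ t in Set.Iic 0, gaussianPDFReal 0 1 t) + ∫ t in (0 : ℝ)..c, gaussianPDFReal 0 1 t := by
    funext c
    rw [← intervalIntegral.integral_Iic_sub_Iic hint.integrableOn hint.integrableOn,
      Measure.real, gaussianReal_apply_eq_integral 0 one_ne_zero, ENNReal.toReal_ofReal]
    · ring
    · exact integral_nonneg fun t ↦ gaussianPDFReal_nonneg 0 1 t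
  rw [heq]
  exact (intervalIntegral.integral_hasDerivAt_right (hcont.intervalIntegrable _ _)
    (hcont.stronglyMeasurableAtFilter _ _) hcont.continuousAt).const_add _

lemma gaussianReal_Ici_neg (c : ℝ) :
    gaussianReal 0 1 (Set.Ici (-c)) = gaussianReal 0 1 (Set.Iic c) := by
  nth_rewrite 1 [← neg_zero, ← gaussianReal_map_neg]
  rw [Measure.map_apply measurable_neg measurableSet_Ici]
  simp

section

variable {E : Type*} [NormedAddCommGroup E] [InnerProductSpace ℝ E] [FiniteDimensional ℝ E]
  [MeasurableSpace E] [BorelSpace E]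

lemma map_inner_stdGaussian {x : E} (hx : ‖x‖ = 1) :
    (stdGaussian E).map (fun ξ ↦ ⟪ξ, x⟫) = gaussianReal 0 1 := by
  refine Measure.ext_of_charFun (funext fun t ↦ ?_)
  rw [charFun_gaussianReal, charFun_apply_real, integral_map (by fun_prop) (by fun_prop)]
  have h := charFun_stdGaussian (t • x)
  rw [charFun_apply] at h
  simp only [real_inner_smul_right, norm_smul, hx] at h
  simp only [Complex.ofReal_mul] at h
  rw [h]
  congr 1
  simp [← Complex.ofReal_pow, neg_div]

lemma stdGaussian_singleton {x : E} (hx : ‖x‖ = 1) (a : E) : stdGaussian E {a} = 0 := by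
  have : NullSingletonClass (gaussianReal 0 1) := nullSingletonClass_gaussianReal one_ne_zero
  refine measure_mono_null (t := (fun ξ ↦ ⟪ξ, x⟫) ⁻¹' {⟪a, x⟫}) (by simp) ?_
  rw [← Measure.map_apply (by fun_prop) (measurableSet_singleton _), map_inner_stdGaussian hx]
  exact measure_singleton _

variable {ν : Measure E} [IsProbabilityMeasure ν]

lemma integral_gaussianReal_Iic_inner (hnorm : ∀ᵐ x ∂ν, ‖x‖ = 1)
    (hhalf : ∀ u : E, u ≠ 0 → ν {x | 0 ≤ ⟪u, x⟫} = 1 / 2) (a : E) :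
    ∫ x, (gaussianReal 0 1).real (Set.Iic ⟪a, x⟫) ∂ν = 1 / 2 := by
  obtain ⟨x₀, hx₀⟩ := hnorm.exists
  have hS : MeasurableSet {z : E × E | 0 ≤ ⟪z.1 + a, z.2⟫} :=
    measurableSet_le measurable_const (by fun_prop)
  have hprod : ((stdGaussian E).prod ν) {z | 0 ≤ ⟪z.1 + a, z.2⟫} = 1 / 2 := by
    rw [Measure.prod_apply hS]
    have hne : ∀ᵐ ξ ∂(stdGaussian E), ξ ≠ -a := by
      rw [ae_iff]
      simpa using stdGaussian_singleton hx₀ (-a)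
    rw [lintegral_congr_ae (g := fun _ ↦ 1 / 2)]
    · simp
    · filter_upwards [hne] with ξ hξ
      exact hhalf _ fun h ↦ hξ (eq_neg_of_add_eq_zero_left h)
  rw [Measure.prod_apply_symm hS, lintegral_congr_ae
    (g := fun x ↦ gaussianReal 0 1 (Set.Iic ⟪a, x⟫))] at hprod
  · have hmeas : Measurable fun c ↦ gaussianReal 0 1 (Set.Iic c) :=
      Monotone.measurable fun c d h ↦ measure_mono (Set.Iic_subset_Iic.2 h)
    unfold Measure.real
    rw [integral_toReal, hprod]
    · simp
    · exact (hmeas.comp (by fun_prop : Measurable fun x : E ↦ ⟪a, x⟫)).aemeasurable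
    · exact .of_forall fun x ↦ measure_lt_top _ _
  · filter_upwards [hnorm] with x hx
    rw [← gaussianReal_Ici_neg, ← map_inner_stdGaussian hx,
      Measure.map_apply (by fun_prop) measurableSet_Ici]
    congr 1
    ext ξ
    simp [inner_add_left, neg_le_iff_add_nonneg]

lemma integrable_inner_of_norm_eq_one (hnorm : ∀ᵐ x ∂ν, ‖x‖ = 1) (a : E) :
    Integrable (fun x ↦ ⟪a, x⟫) ν := by
  refine .of_bound (by fun_prop) ‖a‖ ?_
  filter_upwards [hnorm] with x hx
  simpa [hx] using norm_inner_le_norm (𝕜 := ℝ) a x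

lemma integral_inner_mul_exp (hnorm : ∀ᵐ x ∂ν, ‖x‖ = 1)
    (hhalf : ∀ u : E, u ≠ 0 → ν {x | 0 ≤ ⟪u, x⟫} = 1 / 2) (a : E) (n : ℕ) :
    ∫ x, ⟪a, x⟫ * Real.exp (-⟪a, x⟫ ^ 2 / 2) ^ n ∂ν = 0 := by
  have hPhi : Measurable fun c ↦ (gaussianReal 0 1).real (Set.Iic c) :=
    Monotone.measurable fun c d h ↦ measureReal_mono (Set.Iic_subset_Iic.2 h)
  have hpdf (s : ℝ) : gaussianPDFReal 0 1 s =
      (√(2 * Real.pi))⁻¹ * Real.exp (-s ^ 2 / 2) := by simp [gaussianPDFReal]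
  have hderiv := (hasDerivAt_integral_of_dominated_loc_of_deriv_le (μ := ν) (x₀ := √n)
    (s := Set.univ) (bound := fun _ ↦ (√(2 * Real.pi))⁻¹ * ‖a‖)
    (F := fun l x ↦ (gaussianReal 0 1).real (Set.Iic (l * ⟪a, x⟫)))
    (F' := fun l x ↦ gaussianPDFReal 0 1 (l * ⟪a, x⟫) * ⟪a, x⟫) Filter.univ_mem
    (.of_forall fun l ↦ (hPhi.comp (by fun_prop)).aestronglyMeasurable)
    (.of_bound (hPhi.comp (by fun_prop)).aestronglyMeasurable 1
      (.of_forall fun x ↦ by simp [abs_of_nonneg, measureReal_le_one]))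
    (by simp only [hpdf]; fun_prop) ?_ (integrable_const _)
    (.of_forall fun x l _ ↦ (hasDerivAt_gaussianReal_Iic _).comp l
      (hasDerivAt_mul_const _))).2
  · have hconst (l : ℝ) : ∫ x, (gaussianReal 0 1).real (Set.Iic (l * ⟪a, x⟫)) ∂ν = 1 / 2 := by
      simpa [real_inner_smul_left] using integral_gaussianReal_Iic_inner hnorm hhalf (l • a)
    simp only [hconst] at hderiv
    have hzero := hderiv.unique (hasDerivAt_const _ _)
    simp only [hpdf, mul_assoc, integral_const_mul] at hzero
    rw [← (mul_eq_zero.1 hzero).resolve_left (by positivity)]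
    congr 1 with x
    rw [mul_comm, ← Real.exp_nat_mul, mul_pow, Real.sq_sqrt (Nat.cast_nonneg n)]
    ring_nf
  · filter_upwards [hnorm] with x hx l _
    rw [norm_mul, hpdf]
    gcongr
    · rw [norm_mul, Real.norm_of_nonneg (by positivity), Real.norm_of_nonneg (by positivity)]
      refine mul_le_of_le_one_right (by positivity) (Real.exp_le_one_iff.2 ?_)
      nlinarith [sq_nonneg (l * ⟪a, x⟫)]
    · simpa [hx] using norm_inner_le_norm (𝕜 := ℝ) a x

lemma integral_inner_mul_eval_exp (hnorm : ∀ᵐ x ∂ν, ‖x‖ = 1)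
    (hhalf : ∀ u : E, u ≠ 0 → ν {x | 0 ≤ ⟪u, x⟫} = 1 / 2) (a : E) (q : Polynomial ℝ) :
    ∫ x, ⟪a, x⟫ * q.eval (Real.exp (-⟪a, x⟫ ^ 2 / 2)) ∂ν = 0 := by
  simp only [Polynomial.eval_eq_sum_range, Finset.mul_sum, mul_left_comm (⟪a, _⟫)]
  rw [integral_finsetSum]
  · simp [integral_const_mul, integral_inner_mul_exp hnorm hhalf]
  · refine fun n _ ↦ .const_mul ?_ _
    refine (integrable_inner_of_norm_eq_one hnorm a).mul_bdd (c := 1) (by fun_prop)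
      (.of_forall fun x ↦ ?_)
    rw [Real.norm_of_nonneg (by positivity)]
    refine pow_le_one₀ (by positivity) (Real.exp_le_one_iff.2 ?_)
    nlinarith [sq_nonneg ⟪a, x⟫]

lemma sin_eq_mul_sinc_sqrt_log (s : ℝ) :
    Real.sin s = s * Real.sinc √(-2 * Real.log (Real.exp (-s ^ 2 / 2))) := by
  rw [Real.log_exp, show -2 * (-s ^ 2 / 2) = s ^ 2 by ring, Real.sqrt_sq_eq_abs]
  have : Real.sinc |s| = Real.sinc s := by
    rcases abs_choice s with h | h <;> simp [h, Real.sinc_neg]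
  rw [this]
  rcases eq_or_ne s 0 with rfl | hs
  · simp
  · rw [Real.sinc_of_ne_zero hs, mul_div_cancel₀ _ hs]

lemma integral_sin_inner (hnorm : ∀ᵐ x ∂ν, ‖x‖ = 1)
    (hhalf : ∀ u : E, u ≠ 0 → ν {x | 0 ≤ ⟪u, x⟫} = 1 / 2) (a : E) :
    ∫ x, Real.sin ⟪a, x⟫ ∂ν = 0 := by
  have hq : ContinuousOn (fun y ↦ Real.sinc √(-2 * Real.log y))
      (Set.Icc (Real.exp (-‖a‖ ^ 2 / 2)) 1) := by
    refine Real.continuous_sinc.comp_continuousOn (ContinuousOn.sqrt ?_)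
    refine continuousOn_const.mul (Real.continuousOn_log.mono fun y hy ↦ ?_)
    exact ((Real.exp_pos _).trans_le hy.1).ne'
  have hbound (ε : ℝ) (hε : 0 < ε) : ‖∫ x, Real.sin ⟪a, x⟫ ∂ν‖ ≤ ‖a‖ * ε := by
    obtain ⟨q, hq⟩ := exists_polynomial_near_of_continuousOn _ _ _ hq ε hε
    have hle : ∀ᵐ x ∂ν,
        ‖Real.sin ⟪a, x⟫ - ⟪a, x⟫ * q.eval (Real.exp (-⟪a, x⟫ ^ 2 / 2))‖ ≤ ‖a‖ * ε := by
      filter_upwards [hnorm] with x hx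
      have hax : |⟪a, x⟫| ≤ ‖a‖ := by simpa [hx] using abs_real_inner_le_norm a x
      rw [sin_eq_mul_sinc_sqrt_log, ← mul_sub, norm_mul, norm_sub_rev]
      refine mul_le_mul hax (hq _ ⟨?_, ?_⟩).le (norm_nonneg _) (norm_nonneg _)
      · rw [Real.exp_le_exp]
        linarith [sq_le_sq.2 (hax.trans (le_abs_self _))]
      · rw [Real.exp_le_one_iff]
        nlinarith [sq_nonneg ⟪a, x⟫]
    have hsin : Integrable (fun x ↦ Real.sin ⟪a, x⟫) ν :=
      .of_bound (by fun_prop) 1 (.of_forall fun x ↦ Real.abs_sin_le_one _)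
    have hsub : Integrable (fun x ↦
        Real.sin ⟪a, x⟫ - ⟪a, x⟫ * q.eval (Real.exp (-⟪a, x⟫ ^ 2 / 2))) ν :=
      .of_bound (by fun_prop) _ hle
    have hpoly : Integrable (fun x ↦ ⟪a, x⟫ * q.eval (Real.exp (-⟪a, x⟫ ^ 2 / 2))) ν := by
      simpa only [Pi.sub_def, sub_sub_cancel] using hsin.sub hsub
    have h := norm_integral_le_of_norm_le_const hle
    rw [integral_sub hsin hpoly, integral_inner_mul_eval_exp hnorm hhalf] at h
    simpa using h
  refine norm_le_zero_iff.1 (le_of_forall_pos_le_add fun δ hδ ↦ ?_)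
  refine (hbound (δ / (‖a‖ + 1)) (by positivity)).trans ?_
  rw [zero_add, mul_div_assoc', div_le_iff₀ (by positivity)]
  nlinarith [norm_nonneg a]

/-- A probability measure on the unit sphere that gives mass `1 / 2` to every central halfspace
is symmetric. -/
lemma eq_map_neg_of_measure_halfspace (hnorm : ∀ᵐ x ∂ν, ‖x‖ = 1)
    (hhalf : ∀ u : E, u ≠ 0 → ν {x | 0 ≤ ⟪u, x⟫} = 1 / 2) :
    ν = ν.map (fun x ↦ -x) := by
  have : IsProbabilityMeasure (ν.map (fun x ↦ -x)) :=
    Measure.isProbabilityMeasure_map (by fun_prop)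
  refine Measure.ext_of_charFun (funext fun a ↦ ?_)
  have hneg : charFun (ν.map (fun x ↦ -x)) a = charFun ν (-a) := by
    rw [charFun_apply, charFun_apply, integral_map (by fun_prop) (by fun_prop)]
    simp
  rw [hneg, charFun_neg, eq_comm, Complex.conj_eq_iff_im, charFun_apply]
  have hint : Integrable (fun x ↦ Complex.exp (⟪x, a⟫ * Complex.I)) ν :=
    .of_bound (by fun_prop) 1 (.of_forall fun x ↦ (Complex.norm_exp_ofReal_mul_I _).le)
  have him := integral_im hint
  simp only [RCLike.im_to_complex, Complex.exp_ofReal_mul_I_im] at him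
  rw [← him]
  simp only [real_inner_comm a]
  exact integral_sin_inner hnorm hhalf a

end

theorem reverse_stein_stmt3 {p : ℕ} {Ω : Type*} [MeasureSpace Ω]
    [IsProbabilityMeasure (ℙ : Measure Ω)]
    (Y : Ω → EuclideanSpace ℝ (Fin p)) (hY : Measurable Y)
    (habs : Measure.map Y ℙ ≪ volume)
    (hhalf : ∀ u : EuclideanSpace ℝ (Fin p), u ≠ 0 →
      (ℙ : Measure Ω) {ω | 0 ≤ ⟪u, Y ω⟫} = 1 / 2) :
    Measure.map (fun ω => ‖Y ω‖⁻¹ • Y ω) (ℙ : Measure Ω)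
      = Measure.map (fun ω => -(‖Y ω‖⁻¹ • Y ω)) (ℙ : Measure Ω) := by
  rcases p.eq_zero_or_pos with rfl | hp
  · congr 1
    exact Subsingleton.elim _ _
  have : Nonempty (Fin p) := ⟨⟨0, hp⟩⟩
  have hU : Measurable fun ω ↦ ‖Y ω‖⁻¹ • Y ω := by fun_prop
  have hY0 : ∀ᵐ ω, Y ω ≠ 0 := by
    refine ae_of_ae_map hY.aemeasurable (p := fun y ↦ y ≠ 0) (habs.ae_le ?_)
    exact Measure.ae_ne volume 0
  have : IsProbabilityMeasure (Measure.map (fun ω ↦ ‖Y ω‖⁻¹ • Y ω) ℙ) :=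
    Measure.isProbabilityMeasure_map hU.aemeasurable
  rw [eq_map_neg_of_measure_halfspace (ν := Measure.map (fun ω ↦ ‖Y ω‖⁻¹ • Y ω) ℙ),
    Measure.map_map measurable_neg hU]
  · rfl
  · rw [ae_map_iff hU.aemeasurable (measurableSet_eq_fun (by fun_prop) (by fun_prop))]
    filter_upwards [hY0] with ω hω
    rw [norm_smul, norm_inv, norm_norm, inv_mul_cancel₀ (norm_ne_zero_iff.2 hω)]
  · intro u hu
    rw [Measure.map_apply hU (measurableSet_le (by fun_prop) (by fun_prop)), ← hhalf u hu]
    congr 1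
    ext ω
    rcases eq_or_ne (Y ω) 0 with h | h
    · simp [h]
    · simp [real_inner_smul_right, mul_nonneg_iff_of_pos_left (inv_pos.2 (norm_pos_iff.2 h))]
end

section
/- For p ≥ 3, fixed δ, δ₀ ∈ ℝ^p, and any absolutely continuous distribution for X, the set C = {x : ‖δ̂⁺_JS(x;δ₀) - δ‖ < ‖x - δ‖} contains the set D = {x : ‖δ̂_JS(x;δ₀) - δ‖ < ‖x - δ‖}; moreover C ∩ B₁ = B₁ \ B₂ where B₁ is the ball of radius σ√(p-2) centered at δ₀ and B₂ the ball of radius ‖δ₀ - δ‖ centered at δ, and D ∩ B₂ = ∅ when restricted to B₁ (i.e., within B₁, D ⊆ B₁ \ B₂, in fact D ∩ B₁ ⊊ B₁ \ B₂ when δ₀ ≠ δ). -/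
open Metric

/-- The (untruncated) James–Stein estimator. -/
noncomputable def jsEst {p : ℕ} (σ : ℝ) (x δ₀ : EuclideanSpace ℝ (Fin p)) :
    EuclideanSpace ℝ (Fin p) :=
  (1 - σ ^ 2 * ((p : ℝ) - 2) / ‖x - δ₀‖ ^ 2) • (x - δ₀) + δ₀

/-- The plus-rule (positive-part) James–Stein estimator. -/
noncomputable def jsPlus {p : ℕ} (σ : ℝ) (x δ₀ : EuclideanSpace ℝ (Fin p)) :
    EuclideanSpace ℝ (Fin p) :=
  (max (1 - σ ^ 2 * ((p : ℝ) - 2) / ‖x - δ₀‖ ^ 2) 0) • (x - δ₀) + δ₀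

/-- If moving from `u + y` to `u + k • y` with `k ≤ 0` decreases the norm, then so does moving
to the intermediate point `u`. -/
theorem norm_lt_norm_add_of_norm_smul_add_lt {E : Type*} [NormedAddCommGroup E]
    [NormedSpace ℝ E] {k : ℝ} (hk : k ≤ 0) {y u : E} (h : ‖k • y + u‖ < ‖y + u‖) :
    ‖u‖ < ‖y + u‖ := by
  have e : (1 - k) • u = (k • y + u) + (-k) • (y + u) := by module
  have h1 : (1 - k) * ‖u‖ ≤ ‖k • y + u‖ + (-k) * ‖y + u‖ := by
    calc (1 - k) * ‖u‖ = ‖(1 - k) • u‖ := by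
          rw [norm_smul, Real.norm_of_nonneg (by linarith)]
      _ ≤ ‖k • y + u‖ + ‖(-k) • (y + u)‖ := e ▸ norm_add_le _ _
      _ = _ := by rw [norm_smul (-k), Real.norm_of_nonneg (by linarith)]
  nlinarith

theorem jsPlus_eq_of_mem_ball {p : ℕ} (hp : 2 ≤ p) {σ : ℝ}
    {x δ₀ : EuclideanSpace ℝ (Fin p)} (hx : x ∈ ball δ₀ (σ * Real.sqrt ((p : ℝ) - 2))) :
    jsPlus σ x δ₀ = δ₀ := by
  have ha : (0 : ℝ) ≤ (p : ℝ) - 2 := by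
    have : (2 : ℝ) ≤ p := by exact_mod_cast hp
    linarith
  rw [mem_ball, dist_eq_norm] at hx
  rcases eq_or_ne x δ₀ with rfl | hne
  · simp [jsPlus]
  · have hy : 0 < ‖x - δ₀‖ := norm_pos_iff.2 (sub_ne_zero.2 hne)
    have hsq : ‖x - δ₀‖ ^ 2 ≤ σ ^ 2 * ((p : ℝ) - 2) := by
      rw [← Real.sq_sqrt ha, ← mul_pow]
      gcongr
    have : 1 ≤ σ ^ 2 * ((p : ℝ) - 2) / ‖x - δ₀‖ ^ 2 := (one_le_div (by positivity)).2 hsq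
    rw [jsPlus, max_eq_right (by linarith), zero_smul, zero_add]

theorem norm_jsPlus_sub_lt_of_norm_jsEst_sub_lt {p : ℕ} {σ : ℝ}
    {x δ δ₀ : EuclideanSpace ℝ (Fin p)} (h : ‖jsEst σ x δ₀ - δ‖ < ‖x - δ‖) :
    ‖jsPlus σ x δ₀ - δ‖ < ‖x - δ‖ := by
  unfold jsEst at h
  unfold jsPlus
  rcases le_total 0 (1 - σ ^ 2 * ((p : ℝ) - 2) / ‖x - δ₀‖ ^ 2) with hk | hk
  · rwa [max_eq_left hk]
  · rw [max_eq_right hk, zero_smul, zero_add]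
    rw [add_sub_assoc, ← sub_add_sub_cancel x δ₀ δ] at h
    rw [← sub_add_sub_cancel x δ₀ δ]
    exact norm_lt_norm_add_of_norm_smul_add_lt hk h

/-- On the ray from `δ` through `δ₀`, just beyond `δ₀`, the untruncated estimator overshoots. -/
theorem exists_mem_ball_norm_le_norm_jsEst_sub {p : ℕ} (hp : 3 ≤ p) {σ : ℝ} (hσ : 0 < σ)
    {δ δ₀ : EuclideanSpace ℝ (Fin p)} (hne : δ₀ ≠ δ) :
    ∃ x ∈ ball δ₀ (σ * Real.sqrt ((p : ℝ) - 2)),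
      ‖δ₀ - δ‖ < ‖x - δ‖ ∧ ‖x - δ‖ ≤ ‖jsEst σ x δ₀ - δ‖ := by
  have ha : (0 : ℝ) < (p : ℝ) - 2 := by
    have : (3 : ℝ) ≤ p := by exact_mod_cast hp
    linarith
  have hc : σ ^ 2 * ((p : ℝ) - 2) = (σ * Real.sqrt ((p : ℝ) - 2)) ^ 2 := by
    rw [mul_pow, Real.sq_sqrt ha.le]
  have hs : 0 < σ * Real.sqrt ((p : ℝ) - 2) := mul_pos hσ (Real.sqrt_pos.2 ha)
  unfold jsEst
  rw [hc]
  generalize σ * Real.sqrt ((p : ℝ) - 2) = s at hs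
  have hw : 0 < ‖δ₀ - δ‖ := norm_pos_iff.2 (sub_ne_zero.2 hne)
  obtain ⟨u, hu⟩ : ∃ u, u = δ₀ - δ := ⟨_, rfl⟩
  rw [← hu] at hw ⊢
  obtain ⟨w, hwu⟩ : ∃ w, w = ‖u‖ := ⟨_, rfl⟩
  rw [← hwu] at hw
  obtain ⟨t, ht⟩ : ∃ t, t = s ^ 2 / (4 * w * (s + w)) := ⟨_, rfl⟩
  have ht0 : 0 < t := by rw [ht]; positivity
  have htw : t * w < s := by
    rw [ht, div_mul_eq_mul_div, div_lt_iff₀ (by positivity)]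
    nlinarith [mul_pos (mul_pos hs hs) hw, mul_pos (mul_pos hs hw) hw]
  have hxδ : t • u + δ₀ - δ = (1 + t) • u := by
    rw [add_sub_assoc, ← hu]; module
  have hnx : ‖t • u + δ₀ - δ‖ = (1 + t) * w := by
    rw [hxδ, norm_smul, Real.norm_of_nonneg (by positivity), hwu]
  have hny : ‖t • u‖ = t * w := by
    rw [norm_smul, Real.norm_of_nonneg ht0.le, hwu]
  refine ⟨t • u + δ₀, ?_, ?_, ?_⟩
  · rw [mem_ball, dist_eq_norm, add_sub_cancel_right, hny]
    exact htw
  · rw [hnx, ← hwu]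
    nlinarith
  · rw [hnx, add_sub_cancel_right, hny, add_sub_assoc, ← hu]
    have e : (1 - s ^ 2 / (t * w) ^ 2) • t • u + u = (1 + t - 4 * (s + w) / w) • u := by
      have : (1 - s ^ 2 / (t * w) ^ 2) * t + 1 = 1 + t - 4 * (s + w) / w := by
        have h4 : s ^ 2 = t * (4 * w * (s + w)) := by rw [ht]; field_simp
        rw [h4]
        field_simp
        ring
      rw [← this]
      module
    rw [e, norm_smul, ← hwu]
    gcongr
    have h5 : 2 * (1 + t) ≤ 4 * (s + w) / w := by
      rw [le_div_iff₀ hw]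
      nlinarith
    rw [Real.norm_eq_abs]
    exact le_trans (by linarith) (neg_le_abs _)

/-- The improvement set `C` of the plus-rule James–Stein estimator
contains the improvement set `D` of the untruncated one; moreover
`C ∩ B₁ = B₁ \ B₂` and (when `δ₀ ≠ δ`) `D ∩ B₁ ⊊ B₁ \ B₂`, where `B₁` is the ball of
radius `σ√(p-2)` about `δ₀` and `B₂` the (closed) ball of radius `‖δ₀ - δ‖` about `δ`. -/
theorem reverse_stein_stmt13 {p : ℕ} (hp : 3 ≤ p) (σ : ℝ) (hσ : 0 < σ)
    (δ δ₀ : EuclideanSpace ℝ (Fin p)) (hne : δ₀ ≠ δ) :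
    {x : EuclideanSpace ℝ (Fin p) | ‖jsEst σ x δ₀ - δ‖ < ‖x - δ‖}
        ⊆ {x | ‖jsPlus σ x δ₀ - δ‖ < ‖x - δ‖} ∧
    {x | ‖jsPlus σ x δ₀ - δ‖ < ‖x - δ‖} ∩ ball δ₀ (σ * Real.sqrt ((p : ℝ) - 2))
        = ball δ₀ (σ * Real.sqrt ((p : ℝ) - 2)) \ closedBall δ ‖δ₀ - δ‖ ∧
    {x | ‖jsEst σ x δ₀ - δ‖ < ‖x - δ‖} ∩ ball δ₀ (σ * Real.sqrt ((p : ℝ) - 2))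
        ⊂ ball δ₀ (σ * Real.sqrt ((p : ℝ) - 2)) \ closedBall δ ‖δ₀ - δ‖ := by
  have hC : {x | ‖jsPlus σ x δ₀ - δ‖ < ‖x - δ‖} ∩ ball δ₀ (σ * Real.sqrt ((p : ℝ) - 2))
      = ball δ₀ (σ * Real.sqrt ((p : ℝ) - 2)) \ closedBall δ ‖δ₀ - δ‖ := by
    ext x
    rw [Set.inter_comm, Set.mem_inter_iff, Set.mem_sdiff, mem_closedBall, dist_eq_norm, not_le]
    refine and_congr_right fun hx => ?_
    rw [Set.mem_ofPred_eq, jsPlus_eq_of_mem_ball (by omega) hx]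
  refine ⟨fun x hx => norm_jsPlus_sub_lt_of_norm_jsEst_sub_lt hx, hC, ?_⟩
  refine Set.ssubset_iff_subset_ne.2 ⟨?_, fun heq => ?_⟩
  · rw [← hC]
    exact Set.inter_subset_inter_left _ fun x hx => norm_jsPlus_sub_lt_of_norm_jsEst_sub_lt hx
  · obtain ⟨x, hx, hlt, hle⟩ := exists_mem_ball_norm_le_norm_jsEst_sub hp hσ hne
    have hmem : x ∈ ball δ₀ (σ * Real.sqrt ((p : ℝ) - 2)) \ closedBall δ ‖δ₀ - δ‖ :=
      ⟨hx, by rw [mem_closedBall, dist_eq_norm, not_le]; exact hlt⟩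
    rw [← heq] at hmem
    exact absurd hmem.1 (not_lt.2 hle)
end

section
/- Let Y be spherically symmetric in ℝ^p, let δ₀ - δ be a fixed (or independent) vector, and let B₁ - δ be a ball having 0 on its boundary and radius r = ‖δ₀ - δ‖. Then the conditional probability Pr[Y ∈ B₁ - δ | ‖Y‖, ‖δ₀-δ‖] equals (1/2)Pr[Z₁²/(Z₁²+⋯+Z_p²) ≥ ‖Y‖²/(4r²)] when ‖Y‖ ≤ 2r, and 0 when ‖Y‖ > 2r, where Z ~ N_p(0, I). -/
open MeasureTheory ProbabilityTheory Metric
open scoped ENNReal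

section Cone

variable {E : Type*} [NormedAddCommGroup E] [InnerProductSpace ℝ E]

/-- Any two nonzero vectors are aligned by a linear isometry. -/
lemma exists_linearIsometryEquiv_norm_smul_eq (x y : E) :
    ∃ g : E ≃ₗᵢ[ℝ] E, g (‖y‖ • x) = ‖x‖ • y := by
  have h : ‖(‖y‖ • x)‖ = ‖(‖x‖ • y)‖ := by
    simp [norm_smul, mul_comm]
  exact ⟨_, Submodule.reflection_sub h⟩

variable [MeasurableSpace E] [BorelSpace E]

lemma measurableSet_cone (t : ℝ) (e : E) : MeasurableSet {z : E | t * ‖z‖ * ‖e‖ < inner ℝ z e} :=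
  (isOpen_lt (by fun_prop) (by fun_prop)).measurableSet

/-- The mass that a rotation-invariant measure gives to a circular cone does not depend on the
axis of the cone. -/
lemma measure_cone_eq_of_invariant (μ : Measure E)
    (hμ : ∀ g : E ≃ₗᵢ[ℝ] E, Measure.map g μ = μ) (t : ℝ) {x y : E} (hx : x ≠ 0) (hy : y ≠ 0) :
    μ {z | t * ‖z‖ * ‖x‖ < inner ℝ z x} = μ {z | t * ‖z‖ * ‖y‖ < inner ℝ z y} := by
  obtain ⟨g, hg⟩ := exists_linearIsometryEquiv_norm_smul_eq x y
  have hx' := norm_pos_iff.2 hx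
  have hy' := norm_pos_iff.2 hy
  conv_rhs => rw [← hμ g]
  rw [Measure.map_apply g.continuous.measurable (measurableSet_cone t y)]
  congr 1
  ext z
  have h : ‖y‖ * inner ℝ z x = ‖x‖ * inner ℝ (g z) y := by
    rw [← real_inner_smul_right, ← real_inner_smul_right, ← hg, g.inner_map_map]
  simp only [Set.mem_ofPred_eq, Set.mem_preimage, LinearIsometryEquiv.norm_map]
  rw [← mul_lt_mul_iff_right₀ hy', h, ← mul_lt_mul_iff_right₀ hx' (b := t * ‖z‖ * ‖y‖)]
  ring_nf

/-- Two rotation-invariant probability measures without mass at the origin agree on circular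
cones. -/
lemma measure_cone_eq_measure_cone [SecondCountableTopology E] (μ ν : Measure E) [IsProbabilityMeasure μ]
    [IsProbabilityMeasure ν] (hμ : ∀ g : E ≃ₗᵢ[ℝ] E, Measure.map g μ = μ)
    (hν : ∀ g : E ≃ₗᵢ[ℝ] E, Measure.map g ν = ν) (hμ0 : μ {0} = 0) (hν0 : ν {0} = 0)
    (t : ℝ) {x y : E} (hx : x ≠ 0) (hy : y ≠ 0) :
    μ {z | t * ‖z‖ * ‖x‖ < inner ℝ z x} = ν {z | t * ‖z‖ * ‖y‖ < inner ℝ z y} := by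
  have hS : MeasurableSet {q : E × E | t * ‖q.1‖ * ‖q.2‖ < inner ℝ q.1 q.2} :=
    (isOpen_lt (by fun_prop) (by fun_prop)).measurableSet
  have hμ0' : ∀ᵐ z ∂μ, z ≠ 0 := by simpa [ae_iff] using hμ0
  have hν0' : ∀ᵐ z ∂ν, z ≠ 0 := by simpa [ae_iff] using hν0
  have h1 := Measure.prod_apply (μ := μ) (ν := ν) hS
  have h2 := Measure.prod_apply_symm (μ := μ) (ν := ν) hS
  rw [lintegral_congr_ae (g := fun _ ↦ ν {z | t * ‖z‖ * ‖y‖ < inner ℝ z y})] at h1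
  · rw [lintegral_congr_ae (g := fun _ ↦ μ {z | t * ‖z‖ * ‖x‖ < inner ℝ z x})] at h2
    · simpa using h2.symm.trans h1
    · filter_upwards [hν0'] with w hw
      exact measure_cone_eq_of_invariant μ hμ t hw hx
  · filter_upwards [hμ0'] with w hw
    rw [← measure_cone_eq_of_invariant ν hν t hw hy]
    congr 1
    ext z
    simp only [Set.mem_preimage, Set.mem_ofPred_eq]
    rw [real_inner_comm, mul_right_comm]

end Cone

/-- A quadratic cone which genuinely involves at least two coordinates is null for a product
of atomless measures. -/
lemma measure_pi_quadric_eq_zero {p : ℕ} (ν : Measure ℝ) [IsProbabilityMeasure ν] [NullSingletonClass ν]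
    {s : ℝ} (hs : s ≠ 0) {i j : Fin p} (hij : i ≠ j) :
    (Measure.pi fun _ : Fin p => ν) {z | z i ^ 2 = s * ∑ k, z k ^ 2} = 0 := by
  obtain _ | n := p
  · exact i.elim0
  have hm : MeasurableSet {z : Fin (n + 1) → ℝ | z i ^ 2 = s * ∑ k, z k ^ 2} :=
    measurableSet_eq_fun (by fun_prop) (by fun_prop)
  have hmp := (measurePreserving_piFinSuccAbove (fun _ : Fin (n + 1) => ν) j).symm
  rw [← hmp.measure_preimage hm.nullMeasurableSet,
    Measure.prod_apply_symm (hmp.measurable hm)]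
  refine (lintegral_congr fun y ↦ ?_).trans lintegral_zero
  obtain ⟨k, rfl⟩ := Fin.exists_succAbove_eq hij
  have hfin : {x : ℝ | x ^ 2 = y k ^ 2 / s - ∑ l, y l ^ 2}.Finite := by
    refine (Set.toFinite {√(y k ^ 2 / s - ∑ l, y l ^ 2), -√(y k ^ 2 / s - ∑ l, y l ^ 2)}).subset
      fun x hx ↦ ?_
    rw [← (show x ^ 2 = _ from hx), Real.sqrt_sq_eq_abs]
    rcases abs_choice x with h | h <;> simp [h]
  refine measure_mono_null (fun x hx ↦ ?_) (hfin.measure_zero ν)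
  replace hx : j.insertNth (α := fun _ ↦ ℝ) x y (j.succAbove k) ^ 2 =
      s * ∑ l, j.insertNth (α := fun _ ↦ ℝ) x y l ^ 2 := hx
  simp only [Fin.sum_univ_succAbove _ j, Fin.insertNth_apply_same,
    Fin.insertNth_apply_succAbove] at hx
  simp only [Set.mem_ofPred_eq]
  rw [hx]
  field_simp
  ring

/-- Under the standard Gaussian measure, both halves of a circular double cone have the same
mass. -/
lemma measure_pi_gaussian_double_cone {p : ℕ} {t : ℝ} (ht : 0 < t) {i j : Fin p}
    (hij : i ≠ j) :
    (Measure.pi fun _ : Fin p => gaussianReal 0 1) {z | t ^ 2 ≤ z i ^ 2 / ∑ k, z k ^ 2} =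
      2 * stdGaussian (EuclideanSpace ℝ (Fin p)) {z | t * ‖z‖ < z i} := by
  have hA : MeasurableSet {z : EuclideanSpace ℝ (Fin p) | t * ‖z‖ < z i} :=
    (isOpen_lt (by fun_prop) (by fun_prop)).measurableSet
  have hB : MeasurableSet {z : EuclideanSpace ℝ (Fin p) | t * ‖z‖ < -z i} :=
    (isOpen_lt (by fun_prop) (by fun_prop)).measurableSet
  have hneg : stdGaussian (EuclideanSpace ℝ (Fin p)) {z | t * ‖z‖ < -z i} =
      stdGaussian (EuclideanSpace ℝ (Fin p)) {z | t * ‖z‖ < z i} := by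
    conv_rhs => rw [← stdGaussian_map (LinearIsometryEquiv.neg ℝ)]
    rw [Measure.map_apply (LinearIsometryEquiv.continuous _).measurable hA]
    congr 1
    ext z
    simp
  have hdisj : Disjoint {z : EuclideanSpace ℝ (Fin p) | t * ‖z‖ < z i}
      {z | t * ‖z‖ < -z i} := by
    refine Set.disjoint_left.2 fun z h1 h2 ↦ ?_
    simp only [Set.mem_ofPred_eq] at h1 h2
    have := mul_nonneg ht.le (norm_nonneg z)
    linarith
  rw [two_mul]
  nth_rewrite 2 [← hneg]
  rw [← measure_union hdisj hB, ← map_pi_eq_stdGaussian,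
    Measure.map_apply (by fun_prop) (hA.union hB)]
  have hnull : ∀ᵐ z ∂(Measure.pi fun _ : Fin p => gaussianReal 0 1),
      z i ^ 2 ≠ t ^ 2 * ∑ k, z k ^ 2 := by
    have := nullSingletonClass_gaussianReal (μ := 0) (v := 1) one_ne_zero
    simpa [ae_iff] using measure_pi_quadric_eq_zero (gaussianReal 0 1) (pow_pos ht 2).ne' hij
  refine measure_congr ?_
  filter_upwards [hnull] with z hz
  refine propext ?_
  change t ^ 2 ≤ z i ^ 2 / ∑ k, z k ^ 2 ↔
    t * ‖WithLp.toLp 2 z‖ < z i ∨ t * ‖WithLp.toLp 2 z‖ < -z i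
  have hsum : ∑ k, z k ^ 2 = ‖WithLp.toLp 2 z‖ ^ 2 := by
    simp [EuclideanSpace.real_norm_sq_eq]
  rw [hsum] at hz ⊢
  set N := ‖WithLp.toLp 2 z‖
  have hN : 0 ≤ N := norm_nonneg _
  rw [← lt_abs, ← abs_of_nonneg (mul_nonneg ht.le hN), ← sq_lt_sq, mul_pow]
  rcases hN.eq_or_lt with h0 | h0
  · have hi : z i ^ 2 ≤ 0 := by
      rw [show (0 : ℝ) = N ^ 2 by simp [← h0], ← hsum]
      exact Finset.single_le_sum (f := fun k ↦ z k ^ 2) (fun k _ ↦ sq_nonneg _) (Finset.mem_univ i)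
    exact absurd (by rw [← h0]; nlinarith [sq_nonneg (z i)]) hz
  · rw [le_div_iff₀ (pow_pos h0 2)]
    exact ⟨fun h ↦ lt_of_le_of_ne h hz.symm, le_of_lt⟩

/-- For a spherically symmetric direction (uniform on the sphere, i.e.
any rotation-invariant probability measure `μ` on `S^{p-1}`), the conditional
probability that `ρ·U` lands in an open ball `B` of radius `r` with `0 ∈ ∂B`
(center `c`, `‖c‖ = r`) equals `(1/2)·Pr[Z₁²/(Z₁²+⋯+Z_p²) ≥ ρ²/(4r²)]` when
`ρ ≤ 2r`, and `0` when `ρ > 2r`. -/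
theorem reverse_stein_stmt17 {p : ℕ} (hp : 2 ≤ p)
    (μ : Measure (EuclideanSpace ℝ (Fin p))) [IsProbabilityMeasure μ]
    (hinv : ∀ g : EuclideanSpace ℝ (Fin p) ≃ₗᵢ[ℝ] EuclideanSpace ℝ (Fin p),
      Measure.map g μ = μ)
    (hsphere : μ (sphere (0 : EuclideanSpace ℝ (Fin p)) 1) = 1)
    (c : EuclideanSpace ℝ (Fin p)) (r ρ : ℝ) (hr : 0 < r) (hc : ‖c‖ = r) (hρ : 0 < ρ) :
    μ {z | ‖ρ • z - c‖ < r}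
      = if ρ ≤ 2 * r then
          (1 / 2) * (Measure.pi fun _ : Fin p => gaussianReal 0 1)
            {z | ρ ^ 2 / (4 * r ^ 2) ≤ z ⟨0, by omega⟩ ^ 2 / ∑ i, z i ^ 2}
        else 0 := by
  have : Nontrivial (Fin p) := Fin.nontrivial_iff_two_le.2 hp
  set i : Fin p := ⟨0, by omega⟩
  obtain ⟨j, hji⟩ := exists_ne i
  have hae : ∀ᵐ z ∂μ, ‖z‖ = 1 := by
    have := (prob_compl_eq_zero_iff isClosed_sphere.measurableSet).2 hsphere
    filter_upwards [compl_mem_ae_iff.2 this] with z hz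
    simpa using hz
  have hball (z : EuclideanSpace ℝ (Fin p)) (hz : ‖z‖ = 1) :
      ‖ρ • z - c‖ < r ↔ ρ / 2 < inner ℝ z c := by
    rw [← sq_lt_sq₀ (norm_nonneg _) hr.le, norm_sub_sq_real, norm_smul, hz, hc,
      real_inner_smul_left, Real.norm_of_nonneg hρ.le]
    constructor <;> intro h <;> nlinarith
  split_ifs with h
  · have hc0 : c ≠ 0 := norm_pos_iff.1 (hc ▸ hr)
    have hμ0 : μ {0} = 0 := by
      refine measure_mono_null (fun z hz ↦ ?_) hae
      simp_all
    have hν0 : stdGaussian (EuclideanSpace ℝ (Fin p)) {0} = 0 := by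
      have := nullSingletonClass_gaussianReal (μ := 0) (v := 1) one_ne_zero
      rw [← map_pi_eq_stdGaussian, Measure.map_apply (by fun_prop) (measurableSet_singleton 0)]
      refine measure_mono_null (fun z hz ↦ ?_)
        (measure_pi_quadric_eq_zero (gaussianReal 0 1) one_ne_zero hji)
      have : z = 0 := by simpa using hz
      simp [this]
    have hcone := measure_cone_eq_measure_cone μ (stdGaussian _) hinv
      (fun g ↦ stdGaussian_map g) hμ0 hν0 (ρ / (2 * r)) hc0
      (y := EuclideanSpace.single i (1 : ℝ)) (by simp)
    have hpi := measure_pi_gaussian_double_cone (t := ρ / (2 * r)) (by positivity) hji.symm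
    rw [show ρ ^ 2 / (4 * r ^ 2) = (ρ / (2 * r)) ^ 2 by ring, hpi, ← mul_assoc, one_div,
      ENNReal.inv_mul_cancel two_ne_zero ENNReal.ofNat_ne_top, one_mul]
    simp only [PiLp.norm_single, norm_one, mul_one, EuclideanSpace.inner_single_right,
      one_mul, conj_trivial] at hcone
    rw [← hcone]
    refine measure_congr ?_
    filter_upwards [hae] with z hz
    refine propext ((hball z hz).trans ?_)
    change _ ↔ ρ / (2 * r) * ‖z‖ * ‖c‖ < inner ℝ z c
    rw [hz, hc, show ρ / (2 * r) * 1 * r = ρ / 2 by field_simp]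
  · refine measure_mono_null (fun z hz ↦ ?_) hae
    intro hz1
    have := (hball z hz1).1 hz
    have h2 := real_inner_le_norm z c
    rw [hz1, hc] at h2
    linarith
end
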